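/- Let n ≥ 12 be divisible by 4, let H be a saturated orthogonal array OA(n,n−1,2,2), and let H' be the n×(n−3) design obtained from H by deleting two distinct fixed columns. Let X be the n × ((n−3)(n−4)/2) two-level design whose columns are exactly the interaction columns of all (n−3 choose 2) unordered pairs of distinct columns of H'. Then E(s²)(X) = n²(n−6)/((n−2)(n−3)). -/

import Mathlib

open Finset

/-- The `E(s²)` value of an `n × m` two-level design `X` (columns indexed by `ι`,
`m = card ι`): the average of the squared off-diagonal entries of `XᵀX`. -/
noncomputable def Es2 {n : ℕ} {ι : Type} [Fintype ι] [DecidableEq ι]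
    (X : Fin n → ι → ℚ) : ℚ :=
  (∑ i : ι, ∑ j : ι, if i ≠ j then (∑ r : Fin n, X r i * X r j) ^ 2 else 0) /
    ((Fintype.card ι : ℚ) * ((Fintype.card ι : ℚ) - 1))

/-!
The sum of the squared entries of `XᵀX` equals that of `XXᵀ`, and the rows of `X` can be controlled:
appending a constant column to `H` gives a Hadamard matrix, so distinct rows of `H` have dot product
`-1`. Put `x = H r a * H s a` and `y = H r b * H s b`. For `r ≠ s` the rows of `H'` have dot product
`-1 - x - y`, and since `x² = y² = 1` the second elementary symmetric function of the products
`H r j * H s j` over the columns of `H'`, which is the `(r, s)` entry of `XXᵀ`, is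
`(1 + x) * (1 + y) - (n - 4) / 2`. As `1 + x` and `1 + y` take only the values `0` and `2`, the
square of this entry is affine in `(1 + x) * (1 + y)`, whose sum over all pairs of rows is `n²`
because the columns `a` and `b` are balanced and orthogonal.
-/

section FiniteSums

variable {ι R : Type*} [Fintype ι]

lemma sum_sq_sum_mul_comm {ρ : Type*} [Fintype ρ] [CommSemiring R] (X : ρ → ι → R) :
    ∑ i, ∑ j, (∑ r, X r i * X r j) ^ 2 = ∑ r, ∑ s, (∑ i, X r i * X s i) ^ 2 := by
  simp only [sq, sum_mul_sum]
  rw [sum_comm_cycle]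
  refine sum_congr rfl fun r _ => ?_
  rw [sum_comm_cycle]
  exact sum_congr rfl fun s _ => sum_congr rfl fun i _ => sum_congr rfl fun j _ =>
    mul_mul_mul_comm ..

lemma two_mul_sum_lt_mul [LinearOrder ι] [CommRing R] (f : ι → R) :
    2 * ∑ p : {p : ι × ι // p.1 < p.2}, f p.1.1 * f p.1.2 = (∑ i, f i) ^ 2 - ∑ i, f i ^ 2 := by
  have sum_lt : ∑ p : {p : ι × ι // p.1 < p.2}, f p.1.1 * f p.1.2
      = ∑ i, ∑ j, if i < j then f i * f j else 0 := by
    rw [← Fintype.sum_prod_type' (f := fun i j => if i < j then f i * f j else 0), ← sum_filter]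
    exact (sum_subtype _ (by simp) fun p : ι × ι => f p.1 * f p.2).symm
  have sum_gt : ∑ p : {p : ι × ι // p.1 < p.2}, f p.1.1 * f p.1.2
      = ∑ i, ∑ j, if j < i then f i * f j else 0 := by
    rw [sum_lt, sum_comm]
    simp only [mul_comm]
  have sum_diag : ∑ i, f i ^ 2 = ∑ i, ∑ j, if i = j then f i * f j else 0 := by
    simp [sq]
  rw [eq_sub_iff_add_eq, two_mul]
  nth_rewrite 2 [sum_gt]
  rw [sum_lt, sum_diag, sq, sum_mul_sum]
  simp only [← sum_add_distrib]
  refine sum_congr rfl fun i _ => sum_congr rfl fun j _ => ?_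
  rcases lt_trichotomy i j with h | rfl | h
  · simp [h, h.not_gt, h.ne]
  · simp
  · simp [h, h.not_gt, h.ne']

lemma two_mul_card_lt [LinearOrder ι] [CommRing R] :
    2 * (Fintype.card {p : ι × ι // p.1 < p.2} : R)
      = (Fintype.card ι : R) ^ 2 - Fintype.card ι := by
  simpa using two_mul_sum_lt_mul fun _ : ι => (1 : R)

lemma sum_subtype_ne_and_ne [DecidableEq ι] [AddCommGroup R] {a b : ι} (hab : a ≠ b) (f : ι → R) :
    ∑ j : {j // j ≠ a ∧ j ≠ b}, f j = ∑ j, f j - f a - f b := by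
  rw [← sum_subtype ({a, b}ᶜ : Finset ι) (by simp) f, ← sum_compl_add_sum {a, b} f, sum_pair hab]
  abel

end FiniteSums

section Design

variable {ρ ι R : Type*} [CommRing R]

/-- `X` is a two-level design with runs `ρ` and factors `ι`. -/
def IsTwoLevel (X : ρ → ι → R) : Prop :=
  ∀ r j, X r j = 1 ∨ X r j = -1

/-- The design of two-factor interaction columns of `D`. For linearly ordered factors, the condition
`p.1 < p.2` selects one representative of each unordered pair. -/
def interactionDesign [LT ι] (D : ρ → ι → R) : ρ → {p : ι × ι // p.1 < p.2} → R :=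
  fun r p => D r p.1.1 * D r p.1.2

/-- The design `H'` left after the columns `a` and `b` of `H` are deleted. -/
def deletePair (H : ρ → ι → R) (a b : ι) : ρ → {j // j ≠ a ∧ j ≠ b} → R :=
  fun r j => H r j

/-- `H` is a saturated two-level orthogonal array of strength two, with runs `ρ` and factors `ι`. -/
structure IsSaturatedOA [Fintype ρ] [Fintype ι] (H : ρ → ι → R) : Prop where
  card_add_one : Fintype.card ι + 1 = Fintype.card ρ
  isTwoLevel : IsTwoLevel H
  sum_col : ∀ j, ∑ r, H r j = 0
  sum_col_mul_col : ∀ j k, j ≠ k → ∑ r, H r j * H r k = 0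

namespace IsTwoLevel

variable {D : ρ → ι → R}

lemma sq_eq_one (hD : IsTwoLevel D) (r : ρ) (j : ι) : D r j ^ 2 = 1 := by
  rcases hD r j with h | h <;> simp [h]

lemma isTwoLevel_deletePair (hD : IsTwoLevel D) (a b : ι) : IsTwoLevel (deletePair D a b) :=
  fun r j => hD r j

lemma isTwoLevel_interactionDesign [LT ι] (hD : IsTwoLevel D) :
    IsTwoLevel (interactionDesign D) := by
  intro r p
  rcases hD r p.1.1 with h₁ | h₁ <;> rcases hD r p.1.2 with h₂ | h₂ <;>
    simp [interactionDesign, h₁, h₂]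

lemma two_mul_sum_interactionDesign_mul [Fintype ι] [LinearOrder ι] (hD : IsTwoLevel D)
    (r s : ρ) :
    2 * ∑ p, interactionDesign D r p * interactionDesign D s p
      = (∑ j, D r j * D s j) ^ 2 - Fintype.card ι := by
  simpa [mul_pow, hD.sq_eq_one, interactionDesign, mul_mul_mul_comm] using
    two_mul_sum_lt_mul fun j => D r j * D s j

lemma Es2_eq {n : ℕ} {ι : Type} [Fintype ι] [DecidableEq ι] {X : Fin n → ι → ℚ}
    (hX : IsTwoLevel X) :
    Es2 X = (∑ r, ∑ s, (∑ j, X r j * X s j) ^ 2 - Fintype.card ι * (n : ℚ) ^ 2) /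
      (Fintype.card ι * (Fintype.card ι - 1)) := by
  have sum_sq_col (j : ι) : ∑ r, X r j * X r j = n := by
    simp [← sq, hX.sq_eq_one]
  have sum_off_diag (i : ι) : (∑ j, if i ≠ j then (∑ r, X r i * X r j) ^ 2 else 0)
      = ∑ j, (∑ r, X r i * X r j) ^ 2 - (n : ℚ) ^ 2 := by
    rw [← sum_filter, filter_ne, sum_erase_eq_sub (mem_univ i), sum_sq_col]
  rw [← sum_sq_sum_mul_comm, Es2]
  simp only [sum_off_diag, sum_sub_distrib, sum_const, card_univ, nsmul_eq_mul]

end IsTwoLevel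

namespace IsSaturatedOA

variable [Fintype ρ] [Fintype ι] {H : ρ → ι → R} {a b : ι}

lemma card_ne_and_ne [DecidableEq ι] (hH : IsSaturatedOA H) (hab : a ≠ b) :
    (Fintype.card {j // j ≠ a ∧ j ≠ b} : R) = Fintype.card ρ - 3 := by
  have card_runs : (Fintype.card ρ : R) = Fintype.card ι + 1 := by
    rw [← hH.card_add_one, Nat.cast_add_one]
  have card_sub : (Fintype.card {j // j ≠ a ∧ j ≠ b} : R) = Fintype.card ι - 1 - 1 := by
    simpa using sum_subtype_ne_and_ne hab fun _ => (1 : R)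
  linear_combination card_sub - card_runs

lemma sum_sum_one_add_mul_one_add (hH : IsSaturatedOA H) (hab : a ≠ b) :
    ∑ r, ∑ s, (1 + H r a * H s a) * (1 + H r b * H s b) = (Fintype.card ρ : R) ^ 2 := by
  have expand (r s : ρ) : (1 + H r a * H s a) * (1 + H r b * H s b)
      = 1 + H r a * H s a + H r b * H s b + (H r a * H r b) * (H s a * H s b) := by
    ring
  simp only [expand, sum_add_distrib, ← sum_mul_sum, hH.sum_col, hH.sum_col_mul_col a b hab]
  simp [sq]

variable {K : Type*} [Field K] [CharZero K] {H : ρ → ι → K}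

lemma sum_row_mul_row [DecidableEq ρ] (hH : IsSaturatedOA H) (r s : ρ) :
    ∑ j, H r j * H s j = (if r = s then (Fintype.card ρ : K) else 0) - 1 := by
  classical
  have : Nonempty ρ := ⟨r⟩
  have card_ne_zero : (Fintype.card ρ : K) ≠ 0 := Nat.cast_ne_zero.2 Fintype.card_ne_zero
  let M : Matrix ρ (Option ι) K := Matrix.of fun r o => o.elim 1 (H r)
  have col_gram : M.transpose * M = (Fintype.card ρ : K) • 1 := by
    ext (_ | j) (_ | k)
    · simp [M, Matrix.mul_apply]
    · simp [M, Matrix.mul_apply, hH.sum_col]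
    · simp [M, Matrix.mul_apply, hH.sum_col]
    · obtain rfl | hjk := eq_or_ne j k
      · simp [M, Matrix.mul_apply, ← sq, hH.isTwoLevel.sq_eq_one]
      · simp [M, Matrix.mul_apply, hH.sum_col_mul_col j k hjk, hjk]
  have left_inv : ((Fintype.card ρ : K)⁻¹ • M.transpose) * M = 1 := by
    rw [Matrix.smul_mul, col_gram, inv_smul_smul₀ card_ne_zero]
  have right_inv : M * ((Fintype.card ρ : K)⁻¹ • M.transpose) = 1 :=
    (Matrix.mul_eq_one_comm_of_card_eq _ _ _ (by simp [hH.card_add_one])).1 left_inv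
  have row_gram : M * M.transpose = (Fintype.card ρ : K) • 1 := by
    rw [← right_inv, Matrix.mul_smul, smul_inv_smul₀ card_ne_zero]
  have entry := congrFun₂ row_gram r s
  rw [Matrix.mul_apply, Fintype.sum_option] at entry
  simpa [M, Matrix.one_apply, eq_sub_iff_add_eq'] using entry

variable [LinearOrder ι]

lemma card_pairs_ne_and_ne (hH : IsSaturatedOA H) (hab : a ≠ b) :
    (Fintype.card {p : {j // j ≠ a ∧ j ≠ b} × {j // j ≠ a ∧ j ≠ b} // p.1 < p.2} : K)
      = (Fintype.card ρ - 3) * (Fintype.card ρ - 4) / 2 := by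
  have h := two_mul_card_lt (ι := {j // j ≠ a ∧ j ≠ b}) (R := K)
  rw [hH.card_ne_and_ne hab] at h
  linear_combination h / 2

lemma sum_row_interactionDesign_mul_of_ne (hH : IsSaturatedOA H) (hab : a ≠ b) {r s : ρ}
    (hrs : r ≠ s) :
    ∑ p, interactionDesign (deletePair H a b) r p * interactionDesign (deletePair H a b) s p
      = (1 + H r a * H s a) * (1 + H r b * H s b) - (Fintype.card ρ - 4) / 2 := by
  classical
  have sum_deletePair : ∑ j, deletePair H a b r j * deletePair H a b s j
      = -1 - H r a * H s a - H r b * H s b := by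
    calc
      _ = ∑ j, H r j * H s j - H r a * H s a - H r b * H s b :=
        sum_subtype_ne_and_ne hab fun j => H r j * H s j
      _ = _ := by rw [hH.sum_row_mul_row, if_neg hrs, zero_sub]
  have h := (hH.isTwoLevel.isTwoLevel_deletePair a b).two_mul_sum_interactionDesign_mul r s
  rw [sum_deletePair, hH.card_ne_and_ne hab] at h
  have sq_eq_one (j : ι) : (H r j * H s j) ^ 2 = 1 := by
    rw [mul_pow, hH.isTwoLevel.sq_eq_one, hH.isTwoLevel.sq_eq_one, one_mul]
  linear_combination h / 2 + sq_eq_one a / 2 + sq_eq_one b / 2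

-- The `if` corrects the off-diagonal formula, which would give `((n - 12) / 2) ^ 2` at `r = s`.
lemma sq_sum_row_interactionDesign_mul [DecidableEq ρ] (hH : IsSaturatedOA H) (hab : a ≠ b)
    (r s : ρ) :
    (∑ p, interactionDesign (deletePair H a b) r p * interactionDesign (deletePair H a b) s p) ^ 2
      = (8 - Fintype.card ρ) * ((1 + H r a * H s a) * (1 + H r b * H s b))
        + ((Fintype.card ρ - 4) / 2) ^ 2
        + if r = s then (((Fintype.card ρ : K) - 3) * (Fintype.card ρ - 4) / 2) ^ 2
            - ((Fintype.card ρ - 12) / 2) ^ 2 else 0 := by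
  have row_sq (r : ρ) (j : ι) := hH.isTwoLevel.sq_eq_one r j
  obtain rfl | hrs := eq_or_ne r s
  · have sum_sq_row : ∑ p, interactionDesign (deletePair H a b) r p
        * interactionDesign (deletePair H a b) r p
          = (Fintype.card ρ - 3) * (Fintype.card ρ - 4) / 2 := by
      simp [← sq, (hH.isTwoLevel.isTwoLevel_deletePair a b).isTwoLevel_interactionDesign.sq_eq_one,
        ← hH.card_pairs_ne_and_ne hab]
    rw [sum_sq_row, if_pos rfl, ← sq, ← sq, row_sq, row_sq]
    ring
  · have one_add_sq (j : ι) : (1 + H r j * H s j) ^ 2 = 2 * (1 + H r j * H s j) := by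
      linear_combination H s j ^ 2 * row_sq r j + row_sq s j
    rw [hH.sum_row_interactionDesign_mul_of_ne hab hrs, if_neg hrs, sub_sq, mul_pow, one_add_sq,
      one_add_sq]
    ring

lemma sum_sum_sq_sum_row_interactionDesign_mul (hH : IsSaturatedOA H) (hab : a ≠ b) :
    ∑ r, ∑ s,
      (∑ p, interactionDesign (deletePair H a b) r p * interactionDesign (deletePair H a b) s p) ^ 2
      = (Fintype.card ρ : K) ^ 2 * ((8 - Fintype.card ρ) + ((Fintype.card ρ - 4) / 2) ^ 2)
        + Fintype.card ρ * (((Fintype.card ρ - 3) * (Fintype.card ρ - 4) / 2) ^ 2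
          - ((Fintype.card ρ - 12) / 2) ^ 2) := by
  classical
  simp only [hH.sq_sum_row_interactionDesign_mul hab, sum_add_distrib, ← mul_sum,
    hH.sum_sum_one_add_mul_one_add hab, sum_const, card_univ, nsmul_eq_mul, sum_ite_eq, mem_univ,
    if_true]
  ring

end IsSaturatedOA

end Design

theorem Es2_interactions_only_delete_two_general {n : ℕ} (hn : 5 < n) {ι : Type} [Fintype ι]
    [LinearOrder ι] {H : Fin n → ι → ℚ} (hH : IsSaturatedOA H) {a b : ι} (hab : a ≠ b) :
    Es2 (interactionDesign (deletePair H a b))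
      = (n : ℚ) ^ 2 * ((n : ℚ) - 6) / (((n : ℚ) - 2) * ((n : ℚ) - 3)) := by
  have hn' : (5 : ℚ) < n := by exact_mod_cast hn
  have two_ne : (n : ℚ) - 2 ≠ 0 := by linarith
  have three_ne : (n : ℚ) - 3 ≠ 0 := by linarith
  have four_ne : (n : ℚ) - 4 ≠ 0 := by linarith
  have five_ne : (n : ℚ) - 5 ≠ 0 := by linarith
  have card_sub_one : ((n : ℚ) - 3) * (n - 4) / 2 - 1 = (n - 2) * (n - 5) / 2 := by ring
  rw [(hH.isTwoLevel.isTwoLevel_deletePair a b).isTwoLevel_interactionDesign.Es2_eq,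
    hH.sum_sum_sq_sum_row_interactionDesign_mul hab, hH.card_pairs_ne_and_ne hab, Fintype.card_fin,
    card_sub_one]
  field_simp
  ring

/-- Let `H'` be a saturated `OA(n, n-1, 2, 2)` with two distinct fixed
columns deleted. The `n × ((n-3)(n-4)/2)` design `X` whose columns are exactly the
two-column interaction columns of `H'` satisfies `E(s²)(X) = n²(n-6)/((n-2)(n-3))`. -/
theorem Es2_interactions_only_delete_two (n : ℕ) (hn : 12 ≤ n) (h4 : 4 ∣ n)
    (H : Fin n → Fin (n - 1) → ℚ)
    (hpm : ∀ i j, H i j = 1 ∨ H i j = -1)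
    (hbal : ∀ j, ∑ i : Fin n, H i j = 0)
    (horth : ∀ j k : Fin (n - 1), j ≠ k → ∑ i : Fin n, H i j * H i k = 0)
    (a b : Fin (n - 1)) (hab : a ≠ b)
    (X : Fin n →
      {p : {j : Fin (n - 1) // j ≠ a ∧ j ≠ b} × {j : Fin (n - 1) // j ≠ a ∧ j ≠ b} //
        p.1.1 < p.2.1} → ℚ)
    (hX : ∀ r p, X r p = H r p.1.1.1 * H r p.1.2.1) :
    Es2 X = (n : ℚ) ^ 2 * ((n : ℚ) - 6) / (((n : ℚ) - 2) * ((n : ℚ) - 3)) := by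
  obtain rfl : X = interactionDesign (deletePair H a b) := funext₂ hX
  exact Es2_interactions_only_delete_two_general (by omega)
    ⟨by simp only [Fintype.card_fin]; omega, hpm, hbal, horth⟩ hab
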